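/- Every d-regular graph G on n vertices with d ≥ 1 admits a permutation π moving all n vertices (an n-permutation) that preserves at least n/(d+1) − 1 edges, i.e., dist(G,G_π) ≤ m − (n/(d+1) − 1). -/

import Mathlib

/-- A permutation matching each vertex it moves with a neighbour, such that the fixed vertices
form an independent set: the swap of the edges of a maximal matching. -/
theorem SimpleGraph.exists_maximal_matching_perm {V : Type*} [Fintype V] [DecidableEq V]
    (G : SimpleGraph V) :
    ∃ σ : Equiv.Perm V, (∀ v, σ (σ v) = v) ∧ (∀ v, σ v ≠ v → G.Adj v (σ v)) ∧
      ∀ u v, σ u = u → σ v = v → ¬ G.Adj u v := by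
  classical
  obtain ⟨σ, hσ, hmax⟩ := Finset.exists_max_image
    (Finset.univ.filter fun σ : Equiv.Perm V =>
      (∀ v, σ (σ v) = v) ∧ ∀ v, σ v ≠ v → G.Adj v (σ v))
    (fun σ => σ.support.card) ⟨1, by simp⟩
  simp only [Finset.mem_filter, Finset.mem_univ, true_and] at hσ hmax
  refine ⟨σ, hσ.1, hσ.2, fun u v hu hv huv => ?_⟩
  have hne := huv.ne
  have hu' : (σ * Equiv.swap u v) u = v := by simp [hv]
  have hv' : (σ * Equiv.swap u v) v = u := by simp [hu]
  have hx : ∀ x, x ≠ u → x ≠ v → (σ * Equiv.swap u v) x = σ x := fun x h1 h2 => by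
    simp [Equiv.swap_apply_of_ne_of_ne h1 h2]
  have hfix : ∀ x y, σ y = y → x ≠ y → σ x ≠ y := fun x y hy hxy h =>
    hxy (σ.injective (h.trans hy.symm))
  have key := hmax (σ * Equiv.swap u v) ⟨fun x => ?_, fun x h => ?_⟩
  · have hlt : σ.support ⊂ (σ * Equiv.swap u v).support := by
      refine Finset.ssubset_iff_of_subset (fun x h => ?_) |>.2 ⟨u, ?_, ?_⟩
      · rw [Equiv.Perm.mem_support] at h ⊢
        rwa [hx x (by rintro rfl; exact h hu) (by rintro rfl; exact h hv)]
      · rw [Equiv.Perm.mem_support, hu']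
        exact hne.symm
      · simpa using hu
    exact absurd (Finset.card_lt_card hlt) (not_lt.2 key)
  · by_cases h1 : x = u
    · rw [h1, hu', hv']
    by_cases h2 : x = v
    · rw [h2, hv', hu']
    rw [hx x h1 h2, hx _ (hfix x u hu h1) (hfix x v hv h2), hσ.1]
  · by_cases h1 : x = u
    · rw [h1, hu']
      exact huv
    by_cases h2 : x = v
    · rw [h2, hv']
      exact huv.symm
    rw [hx x h1 h2] at h ⊢
    exact hσ.2 x h

/-- In a regular graph, an adjacency-respecting permutation with independent fixed points
moves many vertices. -/
theorem SimpleGraph.IsRegularOfDegree.card_mul_le_card_support_mul {V : Type*} [Fintype V]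
    [DecidableEq V] {G : SimpleGraph V} [DecidableRel G.Adj] {d : ℕ}
    (hreg : G.IsRegularOfDegree d) (σ : Equiv.Perm V) (hadj : ∀ v, σ v ≠ v → G.Adj v (σ v))
    (hind : ∀ u v, σ u = u → σ v = v → ¬ G.Adj u v) :
    Fintype.card V * d ≤ σ.support.card * (d + (d - 1)) := by
  have h := Finset.card_mul_le_card_mul (s := σ.supportᶜ) (t := σ.support) G.Adj
    (m := d) (n := d - 1) (fun a ha => ?_) (fun b hb => ?_)
  · rw [← Finset.card_add_card_compl σ.support]
    linarith
  · rw [← hreg.degree_eq a, ← G.card_neighborFinset_eq_degree]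
    refine Finset.card_le_card fun x hx => ?_
    rw [SimpleGraph.mem_neighborFinset] at hx
    rw [Finset.mem_bipartiteAbove, Equiv.Perm.mem_support]
    exact ⟨fun h => hind a x (by simpa using ha) h hx, hx⟩
  · rw [Equiv.Perm.mem_support] at hb
    rw [← hreg.degree_eq b, ← G.card_neighborFinset_eq_degree,
      ← Finset.card_erase_of_mem ((G.mem_neighborFinset b (σ b)).2 (hadj b hb))]
    refine Finset.card_le_card fun x hx => ?_
    rw [Finset.mem_bipartiteBelow, Finset.mem_compl, Equiv.Perm.mem_support, not_not] at hx
    rw [Finset.mem_erase, SimpleGraph.mem_neighborFinset]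
    refine ⟨?_, hx.2.symm⟩
    rintro rfl
    exact hb (σ.injective hx.1)

/-- A nontrivial involution agrees with some fixed-point-free permutation on an invariant set
containing all but at most two of the vertices it moves. -/
theorem Equiv.Perm.exists_fixedPointFree_eqOn {V : Type*} [Fintype V] [DecidableEq V]
    (σ : Equiv.Perm V) (hinv : ∀ v, σ (σ v) = v) (hne : σ.support.Nonempty) :
    ∃ π : Equiv.Perm V, (∀ v, π v ≠ v) ∧ ∃ T ⊆ σ.support,
      (∀ v ∈ T, σ v ∈ T) ∧ (∀ v ∈ T, π v = σ v) ∧ σ.support.card ≤ T.card + 2 := by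
  by_cases hR : ∃ r, σ.supportᶜ = {r}
  · obtain ⟨r, hr⟩ := hR
    obtain ⟨a, ha⟩ := hne
    have hiff : ∀ x, σ x = x ↔ x = r := fun x => by
      have := Finset.ext_iff.1 hr x
      simpa using this
    have hrr := (hiff r).2 rfl
    rw [Equiv.Perm.mem_support] at ha
    have har : a ≠ r := fun h => ha ((hiff a).2 h)
    have hother : ∀ x, x ≠ r → x ≠ a → (σ * Equiv.swap r a) x = σ x := fun x h1 h2 => by
      simp [Equiv.swap_apply_of_ne_of_ne h1 h2]
    refine ⟨σ * Equiv.swap r a, fun x => ?_, (σ.support.erase a).erase (σ a), ?_, ?_, ?_, ?_⟩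
    · by_cases h1 : x = r
      · subst h1
        simp only [Equiv.Perm.mul_apply, Equiv.swap_apply_left]
        exact fun h => har (σ.injective (h.trans hrr.symm))
      by_cases h2 : x = a
      · subst h2
        simpa [hrr] using Ne.symm h1
      rw [hother x h1 h2]
      exact fun h => h1 ((hiff x).1 h)
    · exact (Finset.erase_subset _ _).trans (Finset.erase_subset _ _)
    · intro v hv
      simp only [Finset.mem_erase, Equiv.Perm.mem_support] at hv ⊢
      refine ⟨fun h => hv.2.1 (σ.injective h), fun h => hv.1 ?_,
        fun h => hv.2.2 (σ.injective h)⟩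
      rw [← h, hinv]
    · intro v hv
      simp only [Finset.mem_erase, Equiv.Perm.mem_support] at hv
      exact hother v (fun h => hv.2.2 ((hiff v).2 h)) hv.2.1
    · have h1 := Finset.pred_card_le_card_erase (s := σ.support) (a := a)
      have h2 := Finset.pred_card_le_card_erase (s := σ.support.erase a) (a := σ a)
      omega
  · obtain ⟨f, hf, hfs⟩ := Finset.exists_cycleOn σ.supportᶜ
    have hS : ∀ v ∈ σ.support, (σ * f) v = σ v := fun v hv => by
      have : f v = v := by
        by_contra h
        exact Finset.mem_compl.1 (hfs (Equiv.Perm.mem_support.2 h)) hv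
      simp [this]
    refine ⟨σ * f, fun v => ?_, σ.support, subset_rfl, fun v hv => ?_, hS, by omega⟩
    · by_cases hv : v ∈ σ.support
      · rw [hS v hv]
        exact Equiv.Perm.mem_support.1 hv
      · have hv' : v ∈ σ.supportᶜ := Finset.mem_compl.2 hv
        have hnt : (σ.supportᶜ : Finset V).Nontrivial := by
          rcases (Finset.nonempty_of_ne_empty (Finset.ne_empty_of_mem hv')).exists_eq_singleton_or_nontrivial
            with h | h
          · exact absurd h hR
          · exact h
        have hfv : σ (f v) = f v := by
          have : f v ∈ (σ.supportᶜ : Finset V) := by exact_mod_cast hf.1.mapsTo hv'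
          simpa using this
        rw [Equiv.Perm.mul_apply, hfv]
        exact hf.apply_ne hnt hv'
    · simpa using hv

/-- A permutation agreeing on `T` with an involution that matches adjacent vertices preserves
at least `T.card / 2` edges. -/
theorem SimpleGraph.card_le_two_mul_card_preserved {V : Type*} [Fintype V] [DecidableEq V]
    (G : SimpleGraph V) [DecidableRel G.Adj] (σ π : Equiv.Perm V) (T : Finset V)
    (hinv : ∀ v, σ (σ v) = v) (hadj : ∀ v ∈ T, G.Adj v (σ v))
    (hT : ∀ v ∈ T, σ v ∈ T) (hπ : ∀ v ∈ T, π v = σ v) :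
    T.card ≤ 2 * (G.edgeFinset.filter fun e => e.map π ∈ G.edgeFinset).card := by
  refine Finset.card_le_mul_card_image_of_maps_to (f := fun v => s(v, σ v)) (fun v hv => ?_) 2
    (fun e he => ?_)
  · simp only [Finset.mem_filter, SimpleGraph.mem_edgeFinset, Sym2.map_mk,
      SimpleGraph.mem_edgeSet, hπ v hv, hπ _ (hT v hv), hinv]
    exact ⟨hadj v hv, (hadj v hv).symm⟩
  · induction e with | _ a b =>
    refine (Finset.card_le_card (t := {a, b}) fun v hv => ?_).trans Finset.card_le_two
    simp only [Finset.mem_filter, Sym2.eq_iff] at hv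
    simp only [Finset.mem_insert, Finset.mem_singleton]
    tauto

/-- Every `d`-regular graph on `n` vertices with `d ≥ 1` admits a
fixed-point-free permutation `π` of its vertices (an `n`-permutation) that
preserves at least `n/(d+1) - 1` edges, i.e.
`dist(G,G_π) ≤ m - (n/(d+1) - 1)` where `m` is the number of edges. -/
theorem stmt7 {V : Type*} [Fintype V] [DecidableEq V]
    (G : SimpleGraph V) [DecidableRel G.Adj] (n d : ℕ)
    (hn : Fintype.card V = n) (hd : 1 ≤ d) (hreg : G.IsRegularOfDegree d) :
    ∃ π : Equiv.Perm V, (∀ v, π v ≠ v) ∧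
      ((G.edgeFinset.filter fun e => e.map π ∉ G.edgeFinset).card : ℚ)
        ≤ (G.edgeFinset.card : ℚ) - ((n : ℚ) / (d + 1) - 1) := by
  obtain ⟨σ, hinv, hadj, hind⟩ := G.exists_maximal_matching_perm
  have hcard := hreg.card_mul_le_card_support_mul σ hadj hind
  suffices h : ∃ π : Equiv.Perm V, (∀ v, π v ≠ v) ∧ σ.support.card ≤
      2 * (G.edgeFinset.filter fun e => e.map π ∈ G.edgeFinset).card + 2 by
    obtain ⟨π, hπ, hk⟩ := h
    refine ⟨π, hπ, ?_⟩
    have hsum := Finset.card_filter_add_card_filter_not (s := G.edgeFinset)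
      (fun e => e.map π ∈ G.edgeFinset)
    set k := (G.edgeFinset.filter fun e => e.map π ∈ G.edgeFinset).card
    have hbound : n ≤ (k + 1) * (d + 1) := by
      obtain ⟨c, rfl⟩ := Nat.exists_eq_add_of_le' hd
      refine Nat.le_of_mul_le_mul_right (c := c + 1) ?_ hd
      have hquad : 2 * (c + 1 + c) ≤ (c + 1 + 1) * (c + 1) := by
        rcases c with _ | c
        · simp
        · nlinarith
      calc n * (c + 1) ≤ σ.support.card * (c + 1 + c) := by simpa [hn] using hcard
        _ ≤ (2 * k + 2) * (c + 1 + c) := Nat.mul_le_mul_right _ hk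
        _ = (k + 1) * (2 * (c + 1 + c)) := by ring
        _ ≤ (k + 1) * ((c + 1 + 1) * (c + 1)) := Nat.mul_le_mul_left _ hquad
        _ = (k + 1) * (c + 1 + 1) * (c + 1) := by ring
    have hdiv : (n : ℚ) / (d + 1) ≤ k + 1 := by
      rw [div_le_iff₀ (by positivity)]
      exact_mod_cast hbound
    rw [← hsum]
    push_cast
    linarith
  rcases σ.support.eq_empty_or_nonempty with he | hne
  · have hV : IsEmpty V := by
      rw [he, Finset.card_empty, zero_mul] at hcard
      rw [← Fintype.card_eq_zero_iff]
      exact (Nat.mul_eq_zero.1 (Nat.le_zero.1 hcard)).resolve_right (by omega)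
    exact ⟨1, fun v => isEmptyElim v, by simp [he]⟩
  · obtain ⟨π, hπ, T, hTS, hT, hπT, hc⟩ := σ.exists_fixedPointFree_eqOn hinv hne
    refine ⟨π, hπ, hc.trans (Nat.add_le_add_right ?_ 2)⟩
    exact G.card_le_two_mul_card_preserved σ π T hinv
      (fun v hv => hadj v (Equiv.Perm.mem_support.1 (hTS hv))) hT hπT
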